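/- Let n, ĝ, ξ̂ ∈ ℝ³ with n and ĝ and ξ̂ unit vectors and ξ̂·n = 0, let Ω ∈ ℝ³, N² ∈ ℝ, λ ∈ ℂ. Set w = ĝ − (n·ĝ)n and d = λ⁴ + λ²(N²|w|² + 4(Ω·n)²), assume d ≠ 0, and define Ṽ = P_n + P_n^⊥ ∘ (λ²·Id + 2λ·R_Ω + N²·ĝĝᵀ) ∘ P_n^⊥ as a ℂ-linear map on ℂ³, where P_n η = (n·η)n, P_n^⊥η = η − (n·η)n, R_Ω η = Ω × η, ĝĝᵀη = (ĝ·η)ĝ. If W is a ℂ-linear map on ℂ³ with W ∘ Ṽ = Id, then ξ̂·(W ξ̂) = (λ² + N²(|w|² − (ξ̂·w)²)) / d. -/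

import Mathlib

/-!
The plane `n^⊥` has the orthonormal basis `ξ, τ` with `τ = n × ξ`. Write `w = a ξ + b τ` and
`o = Ω·n`. On this plane `P_n^⊥ R_Ω P_n^⊥` is `o` times the rotation `ξ ↦ τ`, `τ ↦ -ξ`, so `Ṽ` acts
there by the matrix with columns `(λ² + N² a², 2λo + N² ab)` and `(-2λo + N² ab, λ² + N² b²)`, whose
determinant is `d`. By Cramer's rule `Ṽ ((λ² + N² b²) ξ - (2λo + N² ab) τ) = d ξ`
(`Vtilde_cramer`). Applying `W` and pairing with `ξ` gives `d (ξ·Wξ) = λ² + N² b²`, and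
`b² = |w|² - (ξ·w)²`.
-/

open Matrix

noncomputable section

abbrev V3R : Type := Fin 3 → ℝ
abbrev V3C : Type := Fin 3 → ℂ

/-- Embedding of real 3-vectors into complex 3-vectors. -/
def toC (v : V3R) : V3C := fun i => (v i : ℂ)

/-- The `ℂ`-linear functional `η ↦ v ⬝ᵥ η` (ℂ-bilinear dot product with `v`). -/
def dotL (v : V3C) : V3C →ₗ[ℂ] ℂ where
  toFun η := v ⬝ᵥ η
  map_add' x y := by simp [dotProduct_add]
  map_smul' c x := by simp [dotProduct_smul]

/-- The rank-one map `abᵀ : η ↦ (b·η) a`. -/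
def outerL (a b : V3R) : V3C →ₗ[ℂ] V3C := (dotL (toC b)).smulRight (toC a)

/-- `P_n : η ↦ (n·η) n`. -/
def PnL (n : V3R) : V3C →ₗ[ℂ] V3C := outerL n n

/-- `P_n^⊥ : η ↦ η − (n·η) n`. -/
def PnPerpL (n : V3R) : V3C →ₗ[ℂ] V3C := LinearMap.id - PnL n

/-- `Ṽ = P_n + P_n^⊥ ∘ (λ² Id + 2λ R_Ω + N² ĝĝᵀ) ∘ P_n^⊥`. -/
def Vtilde (n g Ω : V3R) (N2 : ℝ) (l : ℂ) : V3C →ₗ[ℂ] V3C :=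
  PnL n + PnPerpL n ∘ₗ
    (l ^ 2 • (LinearMap.id : V3C →ₗ[ℂ] V3C)
      + (2 * l) • (crossProduct (toC Ω) : V3C →ₗ[ℂ] V3C)
      + (N2 : ℂ) • outerL g g) ∘ₗ PnPerpL n


theorem toC_dot (a b : V3R) : toC a ⬝ᵥ toC b = ((a ⬝ᵥ b : ℝ) : ℂ) := by
  simp [toC, dotProduct, Fin.sum_univ_three]

theorem toC_comb (p q r : ℝ) (a b c : V3R) :
    toC (p • a + q • b + r • c) = (p : ℂ) • toC a + (q : ℂ) • toC b + (r : ℂ) • toC c := by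
  ext i; simp [toC]

theorem toC_cross (a b : V3R) : toC (crossProduct a b) = crossProduct (toC a) (toC b) := by
  ext i; fin_cases i <;> simp [toC, cross_apply]

/-- Expansion of a vector in the orthonormal frame `n, ξ, n × ξ`. -/
theorem frame_expand (n ξ x : V3R) (hn : n ⬝ᵥ n = 1) (hξ : ξ ⬝ᵥ ξ = 1) (ho : n ⬝ᵥ ξ = 0) :
    x = (n ⬝ᵥ x) • n + (ξ ⬝ᵥ x) • ξ + (crossProduct n ξ ⬝ᵥ x) • crossProduct n ξ := by
  have ho' : ξ ⬝ᵥ n = 0 := by rw [dotProduct_comm]; exact ho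
  have hτ : crossProduct n ξ ⬝ᵥ crossProduct n ξ = 1 := by
    rw [cross_dot_cross, hn, hξ, ho, ho']; norm_num
  have h1 : n ⬝ᵥ crossProduct n ξ = 0 := dot_self_cross n ξ
  have h2 : ξ ⬝ᵥ crossProduct n ξ = 0 := dot_cross_self n ξ
  generalize crossProduct n ξ = τ at *
  -- The matrix with rows `n, ξ, τ` satisfies `A Aᵀ = 1`, hence `Aᵀ A = 1`.
  have hA : (Matrix.of ![n, ξ, τ]) * (Matrix.of ![n, ξ, τ])ᵀ = 1 := by
    have h3 : τ ⬝ᵥ n = 0 := by rw [dotProduct_comm]; exact h1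
    have h4 : τ ⬝ᵥ ξ = 0 := by rw [dotProduct_comm]; exact h2
    ext i j
    rw [Matrix.mul_apply']
    change ![n, ξ, τ] i ⬝ᵥ ![n, ξ, τ] j = _
    fin_cases i <;> fin_cases j <;> simp [*]
  have hB := mul_eq_one_comm.mp hA
  have hx : ((Matrix.of ![n, ξ, τ])ᵀ * (Matrix.of ![n, ξ, τ])) *ᵥ x = x := by
    rw [hB, Matrix.one_mulVec]
  rw [← Matrix.mulVec_mulVec] at hx
  conv_lhs => rw [← hx]
  ext i
  simp [Matrix.mulVec, dotProduct, Fin.sum_univ_three]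
  ring

/-- Cramer's rule for `Ṽ` on `n^⊥`, with `g = c n + a ξ + b τ` and `Ω = o n + q ξ + r τ`
where `τ = n × ξ`. -/
theorem Vtilde_cramer (n ξ : V3R) (hn : n ⬝ᵥ n = 1) (hξ : ξ ⬝ᵥ ξ = 1) (ho : n ⬝ᵥ ξ = 0)
    (c a b o q r N2 : ℝ) (l : ℂ) :
    Vtilde n (c • n + a • ξ + b • crossProduct n ξ) (o • n + q • ξ + r • crossProduct n ξ) N2 l
      ((l ^ 2 + N2 * b ^ 2) • toC ξ - (2 * l * o + N2 * a * b) • toC (crossProduct n ξ))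
      = (l ^ 4 + l ^ 2 * (N2 * (a ^ 2 + b ^ 2) + 4 * o ^ 2)) • toC ξ := by
  have ho' : ξ ⬝ᵥ n = 0 := by rw [dotProduct_comm]; exact ho
  have hτ : crossProduct n ξ ⬝ᵥ crossProduct n ξ = 1 := by
    rw [cross_dot_cross, hn, hξ, ho, ho']; norm_num
  have h1 : n ⬝ᵥ crossProduct n ξ = 0 := dot_self_cross n ξ
  have h2 : ξ ⬝ᵥ crossProduct n ξ = 0 := dot_cross_self n ξ
  have h3 : crossProduct n ξ ⬝ᵥ n = 0 := by rw [dotProduct_comm]; exact h1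
  have h4 : crossProduct n ξ ⬝ᵥ ξ = 0 := by rw [dotProduct_comm]; exact h2
  have c1 : crossProduct (crossProduct n ξ) ξ = -n := by
    rw [cross_cross_eq_smul_sub_smul, hξ, ho]; simp
  have c2 : crossProduct n (crossProduct n ξ) = -ξ := by
    rw [cross_cross_eq_smul_sub_smul', hn, ho]; simp
  have c3 : crossProduct ξ (crossProduct n ξ) = n := by
    rw [cross_cross_eq_smul_sub_smul', hξ, ho]; simp
  have d1 := toC_cross n ξ
  generalize crossProduct n ξ = τ at *
  have neg (v : V3R) : toC (-v) = - toC v := by ext i; simp [toC]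
  have d2 := toC_cross τ ξ
  have d3 := toC_cross n τ
  have d4 := toC_cross ξ τ
  rw [c1, neg] at d2
  rw [c2, neg] at d3
  rw [c3] at d4
  have e1 := toC_dot n n
  have e2 := toC_dot n ξ
  have e3 := toC_dot n τ
  have e4 := toC_dot ξ n
  have e5 := toC_dot ξ ξ
  have e6 := toC_dot ξ τ
  have e7 := toC_dot τ n
  have e8 := toC_dot τ ξ
  have e9 := toC_dot τ τ
  rw [hn] at e1
  rw [ho] at e2
  rw [h1] at e3
  rw [ho'] at e4
  rw [hξ] at e5
  rw [h2] at e6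
  rw [h3] at e7
  rw [h4] at e8
  rw [hτ] at e9
  simp only [Complex.ofReal_one, Complex.ofReal_zero] at e1 e2 e3 e4 e5 e6 e7 e8 e9
  have P (v : V3C) : PnPerpL n v = v - (toC n ⬝ᵥ v) • toC n := rfl
  have Q (v : V3C) : PnL n v = (toC n ⬝ᵥ v) • toC n := rfl
  have G (g : V3R) (v : V3C) : outerL g g v = (toC g ⬝ᵥ v) • toC g := rfl
  simp only [Vtilde, LinearMap.add_apply, LinearMap.comp_apply, LinearMap.smul_apply,
    LinearMap.id_apply, P, Q, G, toC_comb, map_add, map_sub, map_smul, dotProduct_add,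
    dotProduct_sub, dotProduct_smul, add_dotProduct, smul_dotProduct, dotProduct_neg,
    ← d1, ← d2, ← d3, ← d4, cross_self, e1, e2, e3, e4, e5, e6, e7, e8, e9, smul_eq_mul,
    dotProduct_zero]
  module

/-- With unit vectors `n, ĝ, ξ̂`, `ξ̂ ⊥ n`, `w = ĝ − (n·ĝ)n`,
`d = λ⁴ + λ²(N²|w|² + 4(Ω·n)²) ≠ 0`: if `W ∘ Ṽ = Id` then
`ξ̂·(W ξ̂) = (λ² + N²(|w|² − (ξ̂·w)²))/d`. -/
theorem statement13 (n g ξ Ω : V3R) (hn : n ⬝ᵥ n = 1) (hg : g ⬝ᵥ g = 1) (hξ : ξ ⬝ᵥ ξ = 1)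
    (hortho : ξ ⬝ᵥ n = 0) (N2 : ℝ) (l : ℂ)
    (w : V3R) (hw : w = g - (n ⬝ᵥ g) • n)
    (d : ℂ) (hd : d = l ^ 4 + l ^ 2 * ((N2 * (w ⬝ᵥ w) + 4 * (Ω ⬝ᵥ n) ^ 2 : ℝ) : ℂ))
    (hdne : d ≠ 0)
    (W : V3C →ₗ[ℂ] V3C) (hW : W ∘ₗ Vtilde n g Ω N2 l = LinearMap.id) :
    toC ξ ⬝ᵥ W (toC ξ)
      = (l ^ 2 + (N2 : ℂ) * (((w ⬝ᵥ w : ℝ) : ℂ) - ((ξ ⬝ᵥ w : ℝ) : ℂ) ^ 2)) / d := by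
  have ho : n ⬝ᵥ ξ = 0 := by rw [dotProduct_comm]; exact hortho
  have hτ : crossProduct n ξ ⬝ᵥ crossProduct n ξ = 1 := by
    rw [cross_dot_cross, hn, hξ, ho, hortho]; norm_num
  have h2 : ξ ⬝ᵥ crossProduct n ξ = 0 := dot_cross_self n ξ
  have hgx := frame_expand n ξ g hn hξ ho
  have hΩx := frame_expand n ξ Ω hn hξ ho
  have key := Vtilde_cramer n ξ hn hξ ho (n ⬝ᵥ g) (ξ ⬝ᵥ g) (crossProduct n ξ ⬝ᵥ g)
    (n ⬝ᵥ Ω) (ξ ⬝ᵥ Ω) (crossProduct n ξ ⬝ᵥ Ω) N2 l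
  rw [← hgx, ← hΩx] at key
  generalize crossProduct n ξ = τ at *
  have h3 : τ ⬝ᵥ ξ = 0 := by rw [dotProduct_comm]; exact h2
  have hw' : w = (ξ ⬝ᵥ g) • ξ + (τ ⬝ᵥ g) • τ := by
    rw [hw]
    nth_rewrite 1 [hgx]
    module
  have hww : w ⬝ᵥ w = (ξ ⬝ᵥ g) ^ 2 + (τ ⬝ᵥ g) ^ 2 := by
    rw [hw']
    simp only [dotProduct_add, dotProduct_smul, add_dotProduct, smul_dotProduct, h2, h3, hξ, hτ,
      smul_eq_mul]
    ring
  have hξw : ξ ⬝ᵥ w = ξ ⬝ᵥ g := by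
    rw [hw]
    simp [dotProduct_sub, dotProduct_smul, hortho]
  have hdd : l ^ 4 + l ^ 2 * ((N2 : ℂ) * (((ξ ⬝ᵥ g : ℝ) : ℂ) ^ 2 + ((τ ⬝ᵥ g : ℝ) : ℂ) ^ 2)
      + 4 * ((n ⬝ᵥ Ω : ℝ) : ℂ) ^ 2) = d := by
    rw [hd, hww, dotProduct_comm Ω n]
    push_cast
    ring
  rw [hdd] at key
  have hk := congrArg W key
  rw [← LinearMap.comp_apply, hW, LinearMap.id_apply, map_smul] at hk
  have hk2 := congrArg (fun v => toC ξ ⬝ᵥ v) hk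
  simp only [dotProduct_sub, dotProduct_smul, toC_dot, hξ, h2, smul_eq_mul] at hk2
  rw [eq_div_iff hdne, mul_comm, ← hk2, hww, hξw]
  push_cast
  ring
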